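/- arXiv:2008.09364 — 5 statements merged into one kernel-verified Lean document; each statement's English description precedes it below -/
import Mathlib

section
/- Let p/q be an irreducible fraction with 0 < p < q and gcd(p,q) = 1. Then i(w(p/q)) = w((q−p)/q), where i(u) denotes the word obtained from an LR word u by replacing every letter L by R and every letter R by L. -/
/-!
The reflection `α ↦ 1 - α` fixes the root `1/2` and exchanges the two recursive cases of the
Stern–Brocot path. If `p/q < 1/2`, then `(q-p)/q > 1/2`, so the two paths start with opposite
letters; they continue at `p/(q-p)` and `(q-2p)/(q-p)`, which are again reflections of each other.
-/

/-- The two-letter alphabet for `LR` words. -/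
inductive LR : Type
  | L : LR
  | R : LR
  deriving DecidableEq

/-- The operation `i`: replace every `L` by `R` and every `R` by `L`. -/
def LR.flip : LR → LR
  | .L => .R
  | .R => .L

/-- The Stern–Brocot path (recorded from the root `1/2` downwards) of the fraction
`p/q ∈ (0,1)`: at each step we pass to the left or right subinterval. -/
def sbPath (p q : ℕ) : List LR :=
  if h1 : 0 < p ∧ p + p < q then
    LR.L :: sbPath p (q - p)
  else if h2 : p < q ∧ q < p + p then
    LR.R :: sbPath (p + p - q) p
  else []
termination_by q
decreasing_by
  · omega
  · omega

/-- The `LR` word `w(α)` of a rational `α ∈ (0,1)`: the sequence of `L`/`R` steps from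
the vertex `1/2` of the Stern–Brocot tree down to `α`, arranged from right to left.
It satisfies `w(1/2) = ∅` and, if `α` has parents `(β, γ)` with reduced denominators
`b < c` (resp. `b > c`), `w(α) = L · w(γ)` (resp. `w(α) = R · w(β)`). -/
def w (α : ℚ) : List LR := (sbPath α.num.toNat α.den).reverse

theorem sbPath_of_two_mul_lt {p q : ℕ} (hp : 0 < p) (h : 2 * p < q) :
    sbPath p q = LR.L :: sbPath p (q - p) := by
  rw [sbPath, dif_pos (by omega)]

theorem sbPath_of_lt_two_mul {p q : ℕ} (hpq : p < q) (h : q < 2 * p) :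
    sbPath p q = LR.R :: sbPath (2 * p - q) p := by
  rw [sbPath, dif_neg (by omega), dif_pos (by omega), two_mul]

theorem sbPath_two_mul_self (p : ℕ) : sbPath p (2 * p) = [] := by
  rw [sbPath, dif_neg (by omega), dif_neg (by omega)]

theorem sbPath_sub {p q : ℕ} (hp : 0 < p) (hpq : p < q) :
    sbPath (q - p) q = (sbPath p q).map LR.flip := by
  induction q using Nat.strong_induction_on generalizing p with
  | h q ih =>
    rcases lt_trichotomy (2 * p) q with hlt | rfl | hgt
    · calc sbPath (q - p) q
          = LR.R :: sbPath (2 * (q - p) - q) (q - p) :=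
            sbPath_of_lt_two_mul (by omega) (by omega)
        _ = LR.R :: sbPath (q - p - p) (q - p) := by congr 2; omega
        _ = LR.R :: (sbPath p (q - p)).map LR.flip := by rw [ih (q - p) (by omega) hp (by omega)]
        _ = (sbPath p q).map LR.flip := by rw [sbPath_of_two_mul_lt hp hlt]; rfl
    · rw [two_mul, Nat.add_sub_cancel, ← two_mul, sbPath_two_mul_self, List.map_nil]
    · calc sbPath (q - p) q
          = LR.L :: sbPath (q - p) (q - (q - p)) := sbPath_of_two_mul_lt (by omega) (by omega)
        _ = LR.L :: sbPath (p - (2 * p - q)) p := by congr 2 <;> omega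
        _ = LR.L :: (sbPath (2 * p - q) p).map LR.flip := by rw [ih p hpq (by omega) (by omega)]
        _ = (sbPath p q).map LR.flip := by rw [sbPath_of_lt_two_mul hpq hgt]; rfl

theorem den_one_sub (α : ℚ) : (1 - α).den = α.den := by
  exact_mod_cast Rat.natCast_sub_den 1 α

theorem num_one_sub (α : ℚ) : (1 - α).num = α.den - α.num := by
  have h : ((1 - α).num : ℚ) = α.den - α.num := by
    rw [← Rat.mul_den_eq_num (1 - α), ← Rat.mul_den_eq_num α, den_one_sub, sub_mul, one_mul]
  exact_mod_cast h

theorem i_word_eq_general {α : ℚ} (hα₀ : 0 < α) (hα₁ : α < 1) :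
    (w α).map LR.flip = w (1 - α) := by
  have num_pos : 0 < α.num := Rat.num_pos.mpr hα₀
  have num_lt_den : α.num < α.den := Rat.num_lt_denom_iff.mpr hα₁
  have toNat_num_one_sub : (1 - α).num.toNat = α.den - α.num.toNat := by
    rw [num_one_sub]
    omega
  rw [w, w, den_one_sub, toNat_num_one_sub, sbPath_sub (by omega) (by omega), List.map_reverse]

/-- for an irreducible fraction `p/q` with `0 < p < q`,
`i(w(p/q)) = w((q-p)/q)`. -/
theorem i_word_eq (p q : ℕ) (hp : 0 < p) (hpq : p < q) (hcop : Nat.Coprime p q) :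
    (w ((p : ℚ) / (q : ℚ))).map LR.flip = w (((q - p : ℕ) : ℚ) / (q : ℚ)) := by
  have hq : (0 : ℚ) < q := by exact_mod_cast hp.trans hpq
  rw [Nat.cast_sub hpq.le, sub_div, div_self hq.ne']
  exact i_word_eq_general (by positivity) ((div_lt_one hq).mpr (by exact_mod_cast hpq))
end

section
/- Let p/q be an irreducible fraction with 0 < p < q and gcd(p,q) = 1, and let (x/r, y/s) be its pair of parents. Then r(w(p/q)) = w(r/q), where r(u) denotes the reversal of an LR word u. -/
/-- `(x/r, y/s)` is the pair of parents of `α`: they are Farey neighbors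
(`x, y ≥ 0`, `r, s ≥ 1`, `r*y - x*s = 1`) and `α` is their Farey mediant. -/
def IsParents (x r y s : ℕ) (α : ℚ) : Prop :=
  1 ≤ r ∧ 1 ≤ s ∧ r * y = x * s + 1 ∧
    α = ((x : ℚ) + (y : ℚ)) / ((r : ℚ) + (s : ℚ))

/-!
Give the letters the matrices `L = !![1, 1; 0, 1]` and `R = !![1, 0; 1, 1]`. Reading a
Stern–Brocot path from the root, multiply its letters into a matrix `M`; then `M` sends `(1, 1)` to
`(q - p, p)`, and its columns `(r - x, x)` and `(s - y, y)` encode the parents `x/r` and `y/s` of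
`p/q`. Reflection in the anti-diagonal is an anti-automorphism fixing both `L` and `R`, so
reversing the path reflects the matrix. This exchanges the diagonal entries `r - x` and `y`, hence
keeps `q`, the sum of all four entries, and replaces `p = x + y` by `x + (r - x) = r`.
-/

open Matrix

/-- The elementary matrix by which a letter acts on the column `(q - p, p)` of a fraction `p/q`;
in these coordinates `sbPath` is the subtractive Euclidean algorithm. -/
def LR.toMatrix : LR → Matrix (Fin 2) (Fin 2) ℕ
  | L => !![1, 1; 0, 1]
  | R => !![1, 0; 1, 1]

/-- The product of the matrices of the letters of a word, in reading order. Its columns encode the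
parents of the fraction with path `u`, a parent `x/r` being written as `(r - x, x)`. -/
def wordMatrix (u : List LR) : Matrix (Fin 2) (Fin 2) ℕ :=
  (u.map LR.toMatrix).prod

theorem wordMatrix_nil : wordMatrix [] = 1 := rfl

theorem wordMatrix_cons (l : LR) (u : List LR) :
    wordMatrix (l :: u) = l.toMatrix * wordMatrix u := by
  simp [wordMatrix]

theorem wordMatrix_concat (u : List LR) (l : LR) :
    wordMatrix (u ++ [l]) = wordMatrix u * l.toMatrix := by
  simp [wordMatrix]

theorem LR.transpose_toMatrix_submatrix_rev (l : LR) :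
    l.toMatrixᵀ.submatrix Fin.revPerm Fin.revPerm = l.toMatrix := by
  cases l <;> decide

theorem wordMatrix_reverse (u : List LR) :
    wordMatrix u.reverse = (wordMatrix u)ᵀ.submatrix Fin.revPerm Fin.revPerm := by
  induction u with
  | nil => simp [wordMatrix_nil]
  | cons l u ih =>
    rw [List.reverse_cons, wordMatrix_concat, wordMatrix_cons, transpose_mul,
      ← submatrix_mul_equiv _ _ _ Fin.revPerm, ih, l.transpose_toMatrix_submatrix_rev]

theorem row_le_or_eq_one_of_mul_eq_mul_add_one {a b c d : ℕ} (h : a * d = b * c + 1) :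
    (c ≤ a ∧ d ≤ b) ∨ (a ≤ c ∧ b ≤ d) ∨ (a = 1 ∧ b = 0 ∧ c = 0 ∧ d = 1) := by
  rcases lt_or_ge c a with hca | hac <;> rcases lt_or_ge b d with hbd | hdb
  · have hle : (b + 1) * (c + 1) ≤ a * d := by
      rw [mul_comm a]
      exact Nat.mul_le_mul hbd hca
    have hbc : b + c = 0 := by linarith
    obtain ⟨rfl, rfl⟩ := Nat.add_eq_zero_iff.mp hbc
    simp_all
  · exact .inl ⟨hca.le, hdb⟩
  · exact .inr (.inl ⟨hac, hbd.le⟩)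
  · have hle : a * d ≤ b * c := by
      rw [mul_comm b]
      exact Nat.mul_le_mul hac hdb
    omega

theorem exists_wordMatrix_eq (a b c d : ℕ) (h : a * d = b * c + 1) :
    ∃ u, wordMatrix u = !![a, b; c, d] := by
  have had : 0 < a * d := h ▸ Nat.succ_pos (b * c)
  have ha : 0 < a := Nat.pos_of_mul_pos_right had
  have hd : 0 < d := Nat.pos_of_mul_pos_left had
  rcases row_le_or_eq_one_of_mul_eq_mul_add_one h with
    ⟨hca, hdb⟩ | ⟨hac, hbd⟩ | ⟨rfl, rfl, rfl, rfl⟩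
  · obtain ⟨a, rfl⟩ := Nat.exists_eq_add_of_le' hca
    obtain ⟨b, rfl⟩ := Nat.exists_eq_add_of_le' hdb
    obtain ⟨u, hu⟩ := exists_wordMatrix_eq a b c d (by linarith)
    exact ⟨.L :: u, by simp [wordMatrix_cons, LR.toMatrix, hu]⟩
  · obtain ⟨c, rfl⟩ := Nat.exists_eq_add_of_le hac
    obtain ⟨d, rfl⟩ := Nat.exists_eq_add_of_le hbd
    obtain ⟨u, hu⟩ := exists_wordMatrix_eq a b c d (by linarith)
    exact ⟨.R :: u, by simp [wordMatrix_cons, LR.toMatrix, hu]⟩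
  · exact ⟨[], by rw [wordMatrix_nil, one_fin_two]⟩
termination_by a + b + c + d

theorem sbPath_self_add_self (a : ℕ) : sbPath a (a + a) = [] := by
  rw [sbPath, dif_neg (by omega), dif_neg (by omega)]

theorem sbPath_eq_L_cons {a b : ℕ} (ha : 0 < a) (hb : 0 < b) :
    sbPath b (a + b + b) = .L :: sbPath b (a + b) := by
  rw [sbPath, dif_pos (by omega), Nat.add_sub_cancel]

theorem sbPath_eq_R_cons {a b : ℕ} (ha : 0 < a) (hb : 0 < b) :
    sbPath (a + b) (a + (a + b)) = .R :: sbPath b (a + b) := by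
  rw [sbPath, dif_neg (by omega), dif_pos (by omega)]
  congr 2
  omega

theorem LR.toMatrix_L_mulVec (v : Fin 2 → ℕ) : L.toMatrix *ᵥ v = ![v 0 + v 1, v 1] := by
  ext i
  fin_cases i <;> simp [toMatrix, mulVec, dotProduct]

theorem LR.toMatrix_R_mulVec (v : Fin 2 → ℕ) : R.toMatrix *ᵥ v = ![v 0, v 0 + v 1] := by
  ext i
  fin_cases i <;> simp [toMatrix, mulVec, dotProduct]

theorem wordMatrix_mulVec_one_pos (u : List LR) (i : Fin 2) : 0 < (wordMatrix u *ᵥ 1) i := by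
  induction u generalizing i with
  | nil => simp [wordMatrix_nil]
  | cons l u ih =>
    rw [wordMatrix_cons, ← mulVec_mulVec]
    cases l with
    | L =>
      rw [LR.toMatrix_L_mulVec]
      fin_cases i
      exacts [Nat.add_pos_left (ih 0) _, ih 1]
    | R =>
      rw [LR.toMatrix_R_mulVec]
      fin_cases i
      exacts [ih 0, Nat.add_pos_left (ih 0) _]

theorem sbPath_wordMatrix_mulVec_one (u : List LR) :
    sbPath ((wordMatrix u *ᵥ 1) 1) ((wordMatrix u *ᵥ 1) 0 + (wordMatrix u *ᵥ 1) 1) = u := by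
  induction u with
  | nil => simpa [wordMatrix_nil] using sbPath_self_add_self 1
  | cons l u ih =>
    have h₀ := wordMatrix_mulVec_one_pos u 0
    have h₁ := wordMatrix_mulVec_one_pos u 1
    rw [wordMatrix_cons, ← mulVec_mulVec]
    cases l with
    | L =>
      rw [LR.toMatrix_L_mulVec]
      exact (sbPath_eq_L_cons h₀ h₁).trans (congrArg _ ih)
    | R =>
      rw [LR.toMatrix_R_mulVec]
      exact (sbPath_eq_R_cons h₀ h₁).trans (congrArg _ ih)

theorem sbPath_of_wordMatrix_eq {u : List LR} {a b c d : ℕ} (h : wordMatrix u = !![a, b; c, d]) :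
    sbPath (c + d) (a + b + (c + d)) = u := by
  simpa [h, mulVec, dotProduct] using sbPath_wordMatrix_mulVec_one u

theorem reverse_sbPath_of_mul_eq_mul_add_one {a b c d : ℕ} (h : a * d = b * c + 1) :
    (sbPath (c + d) (a + b + (c + d))).reverse = sbPath (c + a) (d + b + (c + a)) := by
  obtain ⟨u, hu⟩ := exists_wordMatrix_eq a b c d h
  have hrev : wordMatrix u.reverse = !![d, b; c, a] := by
    rw [wordMatrix_reverse, hu]
    ext i j
    fin_cases i <;> fin_cases j <;> rfl
  rw [sbPath_of_wordMatrix_eq hu, sbPath_of_wordMatrix_eq hrev]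

theorem reverse_sbPath_mediant {x r y s : ℕ} (hxr : x ≤ r) (hys : y ≤ s)
    (h : r * y = x * s + 1) :
    (sbPath (x + y) (r + s)).reverse = sbPath r (r + s) := by
  obtain ⟨a, rfl⟩ := Nat.exists_eq_add_of_le hxr
  obtain ⟨b, rfl⟩ := Nat.exists_eq_add_of_le' hys
  have hdet : a * y = b * x + 1 := by linarith
  have hrev := reverse_sbPath_of_mul_eq_mul_add_one hdet
  have hden : a + b + (x + y) = x + a + (b + y) := by ring
  have hden' : y + b + (x + a) = x + a + (b + y) := by ring
  rwa [hden, hden'] at hrev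

theorem w_div_of_coprime {p q : ℕ} (hq : 0 < q) (h : p.Coprime q) :
    w ((p : ℚ) / q) = (sbPath p q).reverse := by
  have hnum : ((p : ℚ) / q).num = p := by
    simpa using Rat.num_div_eq_of_coprime (a := p) (b := q) (by exact_mod_cast hq) h
  have hden : ((p : ℚ) / q).den = q := by
    simpa using Rat.den_div_eq_of_coprime (a := p) (b := q) (by exact_mod_cast hq) h
  rw [w, hnum, hden, Int.toNat_natCast]

section Farey

variable {x r y s : ℕ}

theorem mul_mediant_modEq_one (h : r * y = x * s + 1) :
    r * (x + y) ≡ 1 [MOD r + s] := by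
  have hmul : r * (x + y) = x * (r + s) + 1 := by linarith
  simp [hmul, Nat.ModEq]

theorem eq_mediant_of_isParents {p q : ℕ} (hq : 0 < q) (hcop : p.Coprime q)
    (hpar : IsParents x r y s ((p : ℚ) / q)) : p = x + y ∧ q = r + s := by
  obtain ⟨hr, -, hfarey, heq⟩ := hpar
  have hmed : (x + y).Coprime (r + s) :=
    Nat.coprime_of_mul_modEq_one r (mul_comm r _ ▸ mul_mediant_modEq_one hfarey)
  have hinj := Rat.div_int_inj (a := p) (b := q) (c := (x + y : ℕ)) (d := (r + s : ℕ))
    (by exact_mod_cast hq) (by omega) hcop hmed (by simpa using heq)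
  exact_mod_cast hinj

theorem parents_le_one_of_mediant_lt_one (h : r * y = x * s + 1) (hlt : x + y < r + s) :
    x ≤ r ∧ y ≤ s := by
  have hys : y ≤ s := by
    by_contra! hsy
    have hxr : x + 2 ≤ r := by omega
    have hxs : x * s ≤ r * s := Nat.mul_le_mul_right s (by omega)
    have hry : r * (s + 1) ≤ r * y := Nat.mul_le_mul_left r hsy
    linarith
  refine ⟨?_, hys⟩
  by_contra! hrx
  have hle : r * y ≤ x * s := Nat.mul_le_mul hrx.le hys
  omega

end Farey

/-- for an irreducible fraction `p/q` with `0 < p < q` and pair of parents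
`(x/r, y/s)`, the reversal of the word `w(p/q)` equals `w(r/q)`. -/
theorem rev_word_eq (p q x r y s : ℕ) (hp : 0 < p) (hpq : p < q)
    (hcop : Nat.Coprime p q) (hpar : IsParents x r y s ((p : ℚ) / (q : ℚ))) :
    (w ((p : ℚ) / (q : ℚ))).reverse = w ((r : ℚ) / (q : ℚ)) := by
  have hq : 0 < q := hp.trans hpq
  obtain ⟨rfl, rfl⟩ := eq_mediant_of_isParents hq hcop hpar
  obtain ⟨-, -, hfarey, -⟩ := hpar
  obtain ⟨hxr, hys⟩ := parents_le_one_of_mediant_lt_one hfarey hpq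
  have hcop_r : r.Coprime (r + s) :=
    Nat.coprime_of_mul_modEq_one (x + y) (mul_mediant_modEq_one hfarey)
  rw [w_div_of_coprime hq hcop, w_div_of_coprime hq hcop_r, reverse_sbPath_mediant hxr hys hfarey]
end

section
/- Let n ≥ 2 be even and let a1, …, an be positive integers with an ≥ 2. Write [0, a1, …, an] = p/q in lowest terms and let (x/r, y/s) be the pair of parents of p/q. Then [0, 1, an − 1, a_{n−1}, …, a2, a1] = r/q. -/
/-- `cf [a₀, a₁, …, aₙ]` is the continued fraction
`a₀ + 1/(a₁ + 1/(a₂ + ⋯ + 1/aₙ))`. -/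
def cf : List ℕ → ℚ
  | [] => 0
  | [a] => (a : ℚ)
  | a :: t => (a : ℚ) + 1 / cf t

/-!
Put `M = ∏ !![aᵢ, 1; 1, 0]`. Its first column is `(q, p)` with `[0, a₁, …, aₙ] = p/q`, and
`det M = 1` because `n` is even. If `(x/r, y/s)` are the parents of `p/q`, then
`!![r + s, s; x + y, y]` also has determinant `1` and first column `(q, p)`. Two such matrices whose
upper right entries differ by less than `q` coincide, so this matrix is `M`. Reversing the list
transposes `M`, hence `[0, aₙ, …, a₁] = s/q`, and
`[0, 1, aₙ - 1, …, a₁] = 1 - [0, aₙ, …, a₁] = r/q`.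
-/

theorem cf_cons (a : ℕ) (t : List ℕ) : cf (a :: t) = a + (cf t)⁻¹ := by
  cases t <;> simp [cf]

theorem cf_zero_cons (l : List ℕ) : cf (0 :: l) = (cf l)⁻¹ := by
  simp [cf_cons]

theorem cf_zero_one_pred_cons {a : ℕ} {t : List ℕ} (ha : 0 < a) (h : 1 < cf (a :: t)) :
    cf (0 :: 1 :: (a - 1) :: t) = 1 - (cf (a :: t))⁻¹ := by
  have hpred : cf ((a - 1) :: t) = cf (a :: t) - 1 := by
    rw [cf_cons, cf_cons, Nat.cast_pred ha]
    ring
  rw [cf_zero_cons, cf_cons, hpred]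
  have hne : cf (a :: t) ≠ 0 := by positivity
  have hsub : cf (a :: t) - 1 ≠ 0 := sub_ne_zero.mpr h.ne'
  push_cast
  field_simp
  simp [hne]

/-- The matrix `∏ !![aᵢ, 1; 1, 0]` of the continued fraction `[a₁, …, aₙ]`, whose first column holds
the numerator and the denominator of that fraction. -/
def cfMatrix (l : List ℕ) : Matrix (Fin 2) (Fin 2) ℤ :=
  (l.map fun a : ℕ ↦ !![(a : ℤ), 1; 1, 0]).prod

section cfMatrix

open Matrix

variable {l : List ℕ}

theorem cfMatrix_cons (a : ℕ) (t : List ℕ) :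
    cfMatrix (a :: t) = !![(a : ℤ), 1; 1, 0] * cfMatrix t := by
  simp [cfMatrix]

theorem cfMatrix_cons_zero (a : ℕ) (t : List ℕ) (j : Fin 2) :
    cfMatrix (a :: t) 0 j = a * cfMatrix t 0 j + cfMatrix t 1 j := by
  simp [cfMatrix_cons, mul_apply]

theorem cfMatrix_cons_one (a : ℕ) (t : List ℕ) (j : Fin 2) :
    cfMatrix (a :: t) 1 j = cfMatrix t 0 j := by
  simp [cfMatrix_cons, mul_apply]

theorem det_cfMatrix (l : List ℕ) : (cfMatrix l).det = (-1) ^ l.length := by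
  induction l with
  | nil => simp [cfMatrix]
  | cons a t ih => simp [cfMatrix_cons, det_mul, ih, det_fin_two_of, pow_succ', -cons_mul]

theorem isCoprime_cfMatrix (l : List ℕ) : IsCoprime (cfMatrix l 1 0) (cfMatrix l 0 0) := by
  have hdet := det_cfMatrix l
  rw [det_fin_two] at hdet
  rcases neg_one_pow_eq_or ℤ l.length with hsign | hsign <;> rw [hsign] at hdet
  · exact ⟨-cfMatrix l 0 1, cfMatrix l 1 1, by linear_combination hdet⟩
  · exact ⟨cfMatrix l 0 1, -cfMatrix l 1 1, by linear_combination -hdet⟩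

theorem cfMatrix_reverse (l : List ℕ) : cfMatrix l.reverse = (cfMatrix l)ᵀ := by
  have htranspose (a : ℕ) : !![(a : ℤ), 1; 1, 0]ᵀ = !![(a : ℤ), 1; 1, 0] := by
    simp [← Matrix.ext_iff, Fin.forall_fin_two]
  simp [cfMatrix, transpose_list_prod, Function.comp_def, htranspose]

theorem cfMatrix_nonneg (l : List ℕ) (i j : Fin 2) : 0 ≤ cfMatrix l i j := by
  induction l generalizing i with
  | nil => fin_cases i <;> fin_cases j <;> simp [cfMatrix]
  | cons a t ih =>
    fin_cases i
    · simpa [cfMatrix_cons_zero] using add_nonneg (mul_nonneg a.cast_nonneg (ih 0)) (ih 1)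
    · simpa [cfMatrix_cons_one] using ih 0

theorem cfMatrix_one_zero_le (hl : ∀ a ∈ l, 0 < a) : cfMatrix l 1 0 ≤ cfMatrix l 0 0 := by
  cases l with
  | nil => simp [cfMatrix]
  | cons a t =>
    have ha : (1 : ℤ) ≤ a := mod_cast hl a List.mem_cons_self
    rw [cfMatrix_cons_zero, cfMatrix_cons_one]
    exact le_add_of_le_of_nonneg (le_mul_of_one_le_left (cfMatrix_nonneg t 0 0) ha)
      (cfMatrix_nonneg t 1 0)

theorem cfMatrix_zero_zero_pos (hl : ∀ a ∈ l, 0 < a) : 0 < cfMatrix l 0 0 := by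
  induction l with
  | nil => simp [cfMatrix]
  | cons a t ih =>
    rw [List.forall_mem_cons] at hl
    rw [cfMatrix_cons_zero]
    exact add_pos_of_pos_of_nonneg (mul_pos (mod_cast hl.1) (ih hl.2)) (cfMatrix_nonneg t 1 0)

-- For `l = []` both sides are `0`: `cf [] = 0` by convention, and the quotient is `1 / 0`.
theorem cf_eq_cfMatrix_div (hl : ∀ a ∈ l, 0 < a) :
    cf l = (cfMatrix l 0 0 : ℚ) / cfMatrix l 1 0 := by
  induction l with
  | nil => simp [cf, cfMatrix]
  | cons a t ih =>
    rw [List.forall_mem_cons] at hl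
    have hq : (cfMatrix t 0 0 : ℚ) ≠ 0 := mod_cast (cfMatrix_zero_zero_pos hl.2).ne'
    rw [cf_cons, ih hl.2, cfMatrix_cons_zero, cfMatrix_cons_one, inv_div]
    push_cast
    field_simp

end cfMatrix

namespace IsParents

variable {x r y s : ℕ} {α : ℚ}

theorem isCoprime (h : IsParents x r y s α) : IsCoprime (x + y : ℤ) (r + s) := by
  obtain ⟨-, -, hdet, -⟩ := h
  refine ⟨r, -x, ?_⟩
  zify at hdet
  linear_combination hdet

theorem den_eq (h : IsParents x r y s α) : α.den = r + s := by
  have hcop := Int.isCoprime_iff_nat_coprime.mp h.isCoprime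
  obtain ⟨hr, -, -, hα⟩ := h
  have hden := Rat.den_div_eq_of_coprime (by lia) hcop
  push_cast at hden
  rw [hα]
  exact_mod_cast hden

end IsParents

theorem eq_and_eq_of_mul_sub_mul_eq_one {p q u v u' v' : ℤ} (h : q * v - u * p = 1)
    (h' : q * v' - u' * p = 1) (hlt : |u - u'| < q) : u = u' ∧ v = v' := by
  have hdvd : q ∣ u - u' := by
    have hcop : IsCoprime q p := ⟨v, -u, by linear_combination h⟩
    exact hcop.dvd_of_dvd_mul_right ⟨v - v', by linear_combination h' - h⟩
  have hu : u = u' := sub_eq_zero.mp (Int.eq_zero_of_abs_lt_dvd hdvd hlt)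
  have hq : q ≠ 0 := ((abs_nonneg _).trans_lt hlt).ne'
  exact ⟨hu, mul_left_cancel₀ hq (by linear_combination h - h' + p * hu)⟩

section Parents

variable {l : List ℕ} {x r y s : ℕ}

theorem cfMatrix_column_zero_of_isParents (hpos : ∀ a ∈ l, 0 < a)
    (hpar : IsParents x r y s (cf (0 :: l))) :
    cfMatrix l 1 0 = x + y ∧ cfMatrix l 0 0 = r + s := by
  have hcop := hpar.isCoprime
  obtain ⟨hr, -, -, hα⟩ := hpar
  rw [cf_zero_cons, cf_eq_cfMatrix_div hpos, inv_div] at hα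
  exact Rat.div_int_inj (cfMatrix_zero_zero_pos hpos) (by lia)
    (Int.isCoprime_iff_nat_coprime.mp (isCoprime_cfMatrix l))
    (Int.isCoprime_iff_nat_coprime.mp hcop) (by push_cast; exact hα)

theorem cfMatrix_eq_of_isParents (hlen : Even l.length) (hpos : ∀ a ∈ l, 0 < a)
    (hpar : IsParents x r y s (cf (0 :: l))) :
    cfMatrix l = !![(r + s : ℤ), s; x + y, y] := by
  obtain ⟨hp, hq⟩ := cfMatrix_column_zero_of_isParents hpos hpar
  obtain ⟨hr, hs, hxy, -⟩ := hpar
  zify at hr hs hxy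
  have hdet := det_cfMatrix l
  rw [hlen.neg_one_pow, Matrix.det_fin_two, hp, hq] at hdet
  have hnonneg : 0 ≤ cfMatrix l 0 1 := cfMatrix_nonneg l 0 1
  have hle : cfMatrix l 0 1 ≤ r + s := by
    have := cfMatrix_one_zero_le (l := l.reverse) (by simpa using hpos)
    simpa [cfMatrix_reverse, hq] using this
  have hdet' : (r + s : ℤ) * y - s * (x + y) = 1 := by linear_combination hxy
  obtain ⟨hu, hv⟩ := eq_and_eq_of_mul_sub_mul_eq_one hdet hdet' (abs_lt.mpr (by lia))
  rw [Matrix.eta_fin_two (cfMatrix l), hp, hq, hu, hv]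

theorem cf_reverse_of_isParents (hlen : Even l.length) (hpos : ∀ a ∈ l, 0 < a)
    (hpar : IsParents x r y s (cf (0 :: l))) : cf l.reverse = (r + s : ℚ) / s := by
  rw [cf_eq_cfMatrix_div (by simpa using hpos), cfMatrix_reverse,
    cfMatrix_eq_of_isParents hlen hpos hpar]
  simp

end Parents

theorem cf_rev_one_eq_general (l : List ℕ) (hne : l ≠ []) (hlen : Even l.length)
    (hpos : ∀ a ∈ l, 0 < a) (x r y s : ℕ) (hpar : IsParents x r y s (cf (0 :: l))) :
    cf (0 :: 1 :: (l.getLast hne - 1) :: l.reverse.tail)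
      = (r : ℚ) / ((cf (0 :: l)).den : ℚ) := by
  have hrev : cf (l.getLast hne :: l.reverse.tail) = (r + s : ℚ) / s := by
    rw [← List.head_reverse (by simpa using hne), List.cons_head_tail,
      cf_reverse_of_isParents hlen hpos hpar]
  have hden := hpar.den_eq
  obtain ⟨hr, hs, -, -⟩ := hpar
  have hgt : 1 < cf (l.getLast hne :: l.reverse.tail) := by
    rw [hrev, one_lt_div (mod_cast hs)]
    exact lt_add_of_pos_left _ (mod_cast hr)
  rw [cf_zero_one_pred_cons (hpos _ (List.getLast_mem hne)) hgt, hrev, inv_div, hden]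
  push_cast
  field_simp
  ring

/-- let `n ≥ 2` be even and `a₁, …, aₙ` positive integers with `aₙ ≥ 2`;
write `[0, a₁, …, aₙ] = p/q` in lowest terms with pair of parents `(x/r, y/s)`.
Then `[0, 1, aₙ - 1, aₙ₋₁, …, a₂, a₁] = r/q`.
Here the list `l = [a₁, …, aₙ]`, so `aₙ = l.getLast` and
`[aₙ₋₁, …, a₁] = l.reverse.tail`. -/
theorem cf_rev_one_eq (l : List ℕ) (hne : l ≠ []) (hlen : Even l.length)
    (hpos : ∀ a ∈ l, 0 < a) (hlast : 2 ≤ l.getLast hne)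
    (x r y s : ℕ) (hpar : IsParents x r y s (cf (0 :: l))) :
    cf (0 :: 1 :: (l.getLast hne - 1) :: l.reverse.tail)
      = (r : ℚ) / ((cf (0 :: l)).den : ℚ) :=
  cf_rev_one_eq_general l hne hlen hpos x r y s hpar
end

section
/- Let p/q be an irreducible fraction with 0 < p < q, p odd and q even, let (x/r, y/s) be its pair of parents, and write p/q = [0, a1, …, an] with n even and a1, …, an positive integers. Then N0(a1, …, an) is even if and only if x is even, and N0(a1, …, an) is odd if and only if y is even. -/
/-- `N₀(a₁, …, aₙ)`: the number of even integers among `a₁, …, aₙ`. -/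
def N0 (l : List ℕ) : ℕ := (l.filter (fun a => a % 2 = 0)).length

/-!
Let `M` be the product of the matrices `!![aᵢ, 1; 1, 0]`. Its first column holds the denominator and
the numerator of `p / q`, its second column those of the previous convergent. For even `n` it has
determinant `1`, and so does `!![r + s, s; x + y, y]`, which has the same first column. The upper
right entries are then congruent modulo `q`, and close enough to be equal, so the matrices agree.

Modulo `2`, the factor `!![aᵢ, 1; 1, 0]` is an element of `GL₂(𝔽₂) ≅ S₃`: a transposition for even
`aᵢ`, a 3-cycle for odd `aᵢ`. Hence the parity of `N₀` is the sign of `M` modulo `2`, which is a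
polynomial in `x`, `r`, `y`, `s`; it reduces to `x` when `q` is even.
-/

open Matrix

/-- The product of the matrices `!![aᵢ, 1; 1, 0]` over `l = [a₁, …, aₙ]`. Writing `pₖ / qₖ` for the
convergents of `[0, a₁, …, aₙ]`, it is `!![qₙ, qₙ₋₁; pₙ, pₙ₋₁]`, where
`p₋₁ = 1` and `q₋₁ = 0`. -/
def convergentMatrix (l : List ℕ) : Matrix (Fin 2) (Fin 2) ℕ :=
  (l.map fun a => !![a, 1; 1, 0]).prod

/-- The sign of an invertible matrix over `𝔽₂`, as an element of `ℤ/2`, under the isomorphism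
`GL₂(𝔽₂) ≅ S₃` given by permuting the nonzero vectors; on singular matrices the value of this
polynomial has no meaning. -/
def signModTwo (M : Matrix (Fin 2) (Fin 2) (ZMod 2)) : ZMod 2 :=
  M 0 0 * M 0 1 + M 1 0 * M 1 1 + M 0 1 * M 1 0

theorem signModTwo_mul {M N : Matrix (Fin 2) (Fin 2) (ZMod 2)} (hM : M.det = 1) (hN : N.det = 1) :
    signModTwo (M * N) = signModTwo M + signModTwo N := by
  have key : ∀ a b c d a' b' c' d' : ZMod 2, a * d - b * c = 1 → a' * d' - b' * c' = 1 →
      signModTwo (!![a, b; c, d] * !![a', b'; c', d']) =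
        signModTwo !![a, b; c, d] + signModTwo !![a', b'; c', d'] := by
    simp only [signModTwo, mul_fin_two, of_apply, cons_val', cons_val_zero, cons_val_one,
      cons_val_fin_one]
    decide
  rw [det_fin_two] at hM hN
  rw [eta_fin_two M, eta_fin_two N]
  exact key _ _ _ _ _ _ _ _ hM hN

theorem convergentMatrix_cons (a : ℕ) (l : List ℕ) :
    convergentMatrix (a :: l) = !![a, 1; 1, 0] * convergentMatrix l := by
  rw [convergentMatrix, List.map_cons, List.prod_cons, convergentMatrix]

theorem convergentMatrix_cons_zero_zero (a : ℕ) (l : List ℕ) :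
    convergentMatrix (a :: l) 0 0 = a * convergentMatrix l 0 0 + convergentMatrix l 1 0 := by
  simp [convergentMatrix_cons, mul_apply]

theorem convergentMatrix_cons_one_zero (a : ℕ) (l : List ℕ) :
    convergentMatrix (a :: l) 1 0 = convergentMatrix l 0 0 := by
  simp [convergentMatrix_cons, mul_apply]

theorem convergentMatrix_concat (l : List ℕ) (a : ℕ) :
    convergentMatrix (l ++ [a]) = convergentMatrix l * !![a, 1; 1, 0] := by
  rw [convergentMatrix, List.map_append, List.prod_append, List.map_singleton, List.prod_singleton,
    convergentMatrix]

theorem det_map_convergentMatrix {R : Type*} [CommRing R] (l : List ℕ) :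
    ((convergentMatrix l).map (Nat.cast : ℕ → R)).det = (-1) ^ l.length := by
  induction l with
  | nil => simp [convergentMatrix]
  | cons a l ih =>
    have hfactor : (!![a, 1; 1, 0].map (Nat.cast : ℕ → R)).det = -1 := by simp [det_fin_two]
    rw [convergentMatrix_cons, ← Nat.coe_castRingHom, Matrix.map_mul, Nat.coe_castRingHom, det_mul,
      hfactor, ih, List.length_cons, pow_succ']

theorem convergentMatrix_zero_zero_pos {l : List ℕ} (hl : ∀ a ∈ l, 0 < a) :
    0 < convergentMatrix l 0 0 := by
  induction l with
  | nil => simp [convergentMatrix]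
  | cons a l ih =>
    rw [List.forall_mem_cons] at hl
    rw [convergentMatrix_cons_zero_zero]
    exact Nat.add_pos_left (Nat.mul_pos hl.1 (ih hl.2)) _

theorem convergentMatrix_zero_one_le_zero_zero {l : List ℕ} (hl : ∀ a ∈ l, 0 < a) :
    convergentMatrix l 0 1 ≤ convergentMatrix l 0 0 := by
  rcases l.eq_nil_or_concat' with rfl | ⟨l, a, rfl⟩
  · simp [convergentMatrix]
  · have ha : 0 < a := hl a (by simp)
    calc convergentMatrix (l ++ [a]) 0 1
        = convergentMatrix l 0 0 := by simp [convergentMatrix_concat, mul_apply]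
      _ ≤ convergentMatrix l 0 0 * a := Nat.le_mul_of_pos_right _ ha
      _ ≤ convergentMatrix l 0 0 * a + convergentMatrix l 0 1 := Nat.le_add_right _ _
      _ = convergentMatrix (l ++ [a]) 0 0 := by simp [convergentMatrix_concat, mul_apply]

theorem cf_zero_cons_cons (a : ℕ) (l : List ℕ) :
    cf (0 :: a :: l) = 1 / (a + cf (0 :: l)) := by
  cases l <;> simp [cf]

theorem cf_zero_cons_eq_div {l : List ℕ} (hl : ∀ a ∈ l, 0 < a) :
    cf (0 :: l) = convergentMatrix l 1 0 / convergentMatrix l 0 0 := by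
  induction l with
  | nil => simp [cf, convergentMatrix]
  | cons a l ih =>
    rw [List.forall_mem_cons] at hl
    have hden : (convergentMatrix l 0 0 : ℚ) ≠ 0 := by
      exact_mod_cast (convergentMatrix_zero_zero_pos hl.2).ne'
    rw [cf_zero_cons_cons, ih hl.2, convergentMatrix_cons_zero_zero, convergentMatrix_cons_one_zero]
    push_cast
    field_simp

theorem natCast_N0_cons (a : ℕ) (l : List ℕ) : (N0 (a :: l) : ZMod 2) = (a + 1) + N0 l := by
  rcases Nat.even_or_odd a with ha | ha
  · simp [N0, Nat.even_iff.mp ha, (ZMod.natCast_eq_zero_iff_even).mpr ha, add_comm]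
  · simp [N0, Nat.odd_iff.mp ha, (ZMod.natCast_eq_one_iff_odd).mpr ha, CharTwo.add_self_eq_zero]

theorem natCast_N0_eq_signModTwo (l : List ℕ) :
    (N0 l : ZMod 2) = signModTwo ((convergentMatrix l).map Nat.cast) := by
  induction l with
  | nil => simp [N0, convergentMatrix, signModTwo]
  | cons a l ih =>
    have hfactor : signModTwo (!![a, 1; 1, 0].map Nat.cast) = a + 1 := by simp [signModTwo]
    have hdet : (!![a, 1; 1, 0].map (Nat.cast : ℕ → ZMod 2)).det = 1 := by simp [det_fin_two]
    have hdetl : ((convergentMatrix l).map (Nat.cast : ℕ → ZMod 2)).det = 1 := by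
      rw [det_map_convergentMatrix, CharTwo.neg_eq, one_pow]
    rw [natCast_N0_cons, ih, convergentMatrix_cons, ← Nat.coe_castRingHom, Matrix.map_mul,
      Nat.coe_castRingHom, signModTwo_mul hdet hdetl, hfactor]

theorem eq_and_eq_of_mul_sub_mul_eq_one_s9 {a b c d b' d' : ℤ} (h : a * d - b * c = 1)
    (h' : a * d' - b' * c = 1) (hlt : |b - b'| < a) : b = b' ∧ d = d' := by
  have hprop : a * (d - d') = (b - b') * c := by linear_combination h - h'
  have hcop : IsCoprime a c := ⟨d, -b, by linear_combination h⟩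
  have hb : b - b' = 0 :=
    Int.eq_zero_of_abs_lt_dvd (hcop.dvd_of_dvd_mul_right (Dvd.intro _ hprop)) hlt
  have ha : a ≠ 0 := ((abs_nonneg _).trans_lt hlt).ne'
  have hd : d - d' = 0 := by simpa [hb, ha] using hprop
  exact ⟨sub_eq_zero.mp hb, sub_eq_zero.mp hd⟩

theorem eq_and_eq_of_div_eq_div {a b c d : ℕ} (hb : 0 < b) (hd : 0 < d) (hab : a.Coprime b)
    (hcd : c.Coprime d) (h : (a : ℚ) / b = c / d) : a = c ∧ b = d := by
  have hint : (a : ℤ) = c ∧ (b : ℤ) = d :=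
    Rat.div_int_inj (by lia) (by lia) (by simpa) (by simpa) (by push_cast; exact h)
  exact_mod_cast hint

theorem IsParents.convergentMatrix_eq {x r y s : ℕ} {l : List ℕ}
    (h : IsParents x r y s (cf (0 :: l))) (hlen : Even l.length) (hl : ∀ a ∈ l, 0 < a) :
    convergentMatrix l = !![r + s, s; x + y, y] := by
  obtain ⟨hr, hs, hfarey, hmed⟩ := h
  have hpos := convergentMatrix_zero_zero_pos hl
  have hle := convergentMatrix_zero_one_le_zero_zero hl
  have hdet := det_map_convergentMatrix (R := ℤ) l
  rw [det_fin_two, hlen.neg_one_pow] at hdet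
  simp only [map_apply] at hdet
  rw [cf_zero_cons_eq_div hl] at hmed
  rw [eta_fin_two (convergentMatrix l)]
  generalize convergentMatrix l 0 0 = A, convergentMatrix l 0 1 = B, convergentMatrix l 1 0 = C,
    convergentMatrix l 1 1 = D at *
  have hdet' : ((r + s : ℕ) : ℤ) * y - s * (x + y : ℕ) = 1 := by
    zify at hfarey
    push_cast
    linear_combination hfarey
  obtain ⟨rfl, rfl⟩ : C = x + y ∧ A = r + s :=
    eq_and_eq_of_div_eq_div hpos (by lia)
      (Nat.isCoprime_iff_coprime.mp ⟨-B, D, by linear_combination hdet⟩)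
      (Nat.isCoprime_iff_coprime.mp ⟨-s, y, by linear_combination hdet'⟩)
      (by exact_mod_cast hmed)
  have hlt : |(B : ℤ) - s| < (r + s : ℕ) := by
    rw [abs_lt]
    lia
  obtain ⟨hB, hD⟩ := eq_and_eq_of_mul_sub_mul_eq_one_s9 hdet hdet' hlt
  rw [Nat.cast_inj] at hB hD
  rw [hB, hD]

theorem IsParents.odd_mul_add_of_even_add {x r y s : ℕ} {α : ℚ} (h : IsParents x r y s α)
    (hden : Even (r + s)) : Odd (s * (x + y)) := by
  have hdet : (r + s) * y = s * (x + y) + 1 := by linear_combination h.2.2.1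
  rw [← Nat.not_even_iff_odd, ← Nat.even_add_one, ← hdet]
  exact hden.mul_right y

theorem IsParents.even_add_of_even_den {x r y s p q : ℕ} (h : IsParents x r y s (p / q))
    (hq : q ≠ 0) (hp : Odd p) (hqe : Even q) : Even (r + s) := by
  obtain ⟨hr, hs, -, hmed⟩ := h
  have hcross : p * (r + s) = (x + y) * q := by
    have hq' : (q : ℚ) ≠ 0 := by exact_mod_cast hq
    have hrs : (r : ℚ) + s ≠ 0 := by positivity
    rw [div_eq_div_iff hq' hrs] at hmed
    exact_mod_cast hmed
  have : Even (p * (r + s)) := hcross ▸ hqe.mul_left _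
  exact (Nat.even_mul.mp this).resolve_left (Nat.not_even_iff_odd.mpr hp)

theorem IsParents.natCast_N0_eq {x r y s : ℕ} {l : List ℕ} (h : IsParents x r y s (cf (0 :: l)))
    (hlen : Even l.length) (hl : ∀ a ∈ l, 0 < a) :
    (N0 l : ZMod 2) = (r + s) * s + (x + y) * y + s * (x + y) := by
  rw [natCast_N0_eq_signModTwo, h.convergentMatrix_eq hlen hl]
  simp [signModTwo]

theorem IsParents.even_N0_iff {x r y s : ℕ} {l : List ℕ} (h : IsParents x r y s (cf (0 :: l)))
    (hden : Even (r + s)) (hlen : Even l.length) (hl : ∀ a ∈ l, 0 < a) :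
    Even (N0 l) ↔ Even x := by
  have hodd := h.odd_mul_add_of_even_add hden
  have hrs : (r + s : ZMod 2) = 0 := by exact_mod_cast ZMod.natCast_eq_zero_iff_even.mpr hden
  have hxy : (x + y : ZMod 2) = 1 := by
    exact_mod_cast ZMod.natCast_eq_one_iff_odd.mpr (Nat.odd_mul.mp hodd).2
  have hs : (s : ZMod 2) = 1 := ZMod.natCast_eq_one_iff_odd.mpr (Nat.odd_mul.mp hodd).1
  have hN0 : (N0 l : ZMod 2) = x := by
    calc (N0 l : ZMod 2)
        = (r + s) * s + (x + y) * y + s * (x + y) := h.natCast_N0_eq hlen hl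
      _ = y + (x + y) := by rw [hrs, hs, hxy]; ring
      _ = x := by rw [add_left_comm, CharTwo.add_self_eq_zero, add_zero]
  rw [← ZMod.natCast_eq_zero_iff_even, hN0, ZMod.natCast_eq_zero_iff_even]

theorem N0_parity_of_one_zero_type_general (p q : ℕ) (hq : q ≠ 0) (hpodd : Odd p) (hqeven : Even q)
    (x r y s : ℕ) (hpar : IsParents x r y s ((p : ℚ) / (q : ℚ)))
    (l : List ℕ) (hlen : Even l.length) (hpos : ∀ a ∈ l, 0 < a)
    (hcf : cf (0 :: l) = (p : ℚ) / (q : ℚ)) :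
    (Even (N0 l) ↔ Even x) ∧ (Odd (N0 l) ↔ Even y) := by
  have hden : Even (r + s) := hpar.even_add_of_even_den hq hpodd hqeven
  have hxy : Odd (x + y) := (Nat.odd_mul.mp (hpar.odd_mul_add_of_even_add hden)).2
  have hx : Even (N0 l) ↔ Even x := (hcf ▸ hpar).even_N0_iff hden hlen hpos
  refine ⟨hx, ?_⟩
  rw [← Nat.not_even_iff_odd, hx, Nat.not_even_iff_odd, Nat.odd_add.mp hxy]

/-- let `p/q` be irreducible with `0 < p < q`, `p` odd, `q` even, with
pair of parents `(x/r, y/s)`, and let `p/q = [0, a₁, …, aₙ]` with `n` even and all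
`aᵢ` positive.  Then `N₀(a₁, …, aₙ)` is even iff `x` is even, and `N₀(a₁, …, aₙ)` is
odd iff `y` is even. -/
theorem N0_parity_of_one_zero_type (p q : ℕ) (hp : 0 < p) (hpq : p < q)
    (hcop : Nat.Coprime p q) (hpodd : Odd p) (hqeven : Even q)
    (x r y s : ℕ) (hpar : IsParents x r y s ((p : ℚ) / (q : ℚ)))
    (l : List ℕ) (hlen : Even l.length) (hpos : ∀ a ∈ l, 0 < a)
    (hcf : cf (0 :: l) = (p : ℚ) / (q : ℚ)) :
    (Even (N0 l) ↔ Even x) ∧ (Odd (N0 l) ↔ Even y) :=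
  N0_parity_of_one_zero_type_general p q (hp.trans hpq).ne' hpodd hqeven x r y s hpar l hlen hpos
    hcf
end

section
/- For every rational number α with 0 < α < 1, wt(1 − α) = −wt(α). -/
/-- The alternating sum `a₀ - a₁ + a₂ - ⋯` of a list. -/
def altSum : List ℕ → ℤ
  | [] => 0
  | a :: t => (a : ℤ) - altSum t

/-- The weight of the continued fraction expansion `[a₀, a₁, …, aₙ]`:
`a₀ - a₁ + a₂ - ⋯ + (-1)ⁿ aₙ` if `n` is even, and
`a₀ - a₁ + a₂ - ⋯ + (-1)ⁿ aₙ + 2` if `n` is odd.  For a positive rational `α`,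
`wt(α)` is this common value for any such expansion of `α`. -/
def wtExp (a₀ : ℕ) (t : List ℕ) : ℤ :=
  altSum (a₀ :: t) + (if Even t.length then 0 else 2)

/-!
The weight is computed by a function on `ℚ` satisfying `wt (q + n) = wt q + n` and, for `q > 0`,
`wt q⁻¹ = 2 - wt q`. Write `q⁻¹ = 1 + y`. Then `q = (1 + y)⁻¹` and `1 - q = (1 + y⁻¹)⁻¹`, so the
two rules give `wt q = 1 - wt y` and `wt (1 - q) = 1 - wt y⁻¹ = wt y - 1`.
-/

theorem den_inv_fract_lt_den {q : ℚ} (hq : Int.fract q ≠ 0) : (Int.fract q)⁻¹.den < q.den := by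
  have fract_pos : 0 < Int.fract q := (Int.fract_nonneg q).lt_of_ne' hq
  have num_lt_den : (Int.fract q).num < (Int.fract q).den :=
    Rat.num_lt_denom_iff.mpr (Int.fract_lt_one q)
  have den_fract : (Int.fract q).den = q.den := by
    rw [Int.fract, Rat.sub_intCast_den]
  rw [Rat.den_inv_of_ne_zero hq]
  have num_pos : 0 < (Int.fract q).num := Rat.num_pos.mpr fract_pos
  lia

/-- The weight `wt(q)`, read off the expansion of `q` that Euclid's algorithm produces. It is
defined on all of `ℚ` by allowing the integral part `a₀` to be negative. The `+ 2` at each step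
carries the parity correction of `wtExp`. -/
def wt (q : ℚ) : ℤ :=
  if Int.fract q = 0 then ⌊q⌋ else ⌊q⌋ + 2 - wt (Int.fract q)⁻¹
termination_by q.den
decreasing_by exact den_inv_fract_lt_den ‹_›

theorem wt_intCast (n : ℤ) : wt n = n := by
  rw [wt]
  simp

theorem wt_intCast_add (n : ℤ) (q : ℚ) : wt (n + q) = n + wt q := by
  rw [wt, wt.eq_def q, Int.fract_intCast_add, Int.floor_intCast_add]
  split_ifs <;> ring

theorem wt_inv_of_lt_one {q : ℚ} (h0 : 0 < q) (h1 : q < 1) : wt q⁻¹ = 2 - wt q := by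
  have fract_eq : Int.fract q = q := Int.fract_eq_self.mpr ⟨h0.le, h1⟩
  have floor_eq : ⌊q⌋ = 0 := Int.floor_eq_zero_iff.mpr ⟨h0.le, h1⟩
  rw [wt.eq_def q, fract_eq, floor_eq, if_neg h0.ne']
  ring

theorem wt_inv {q : ℚ} (hq : 0 < q) : wt q⁻¹ = 2 - wt q := by
  rcases lt_trichotomy q 1 with h | rfl | h
  · exact wt_inv_of_lt_one hq h
  · have wt_one : wt 1 = 1 := mod_cast wt_intCast 1
    rw [inv_one, wt_one]
    norm_num
  · have wt_inv_inv := wt_inv_of_lt_one (inv_pos.mpr hq) (inv_lt_one_of_one_lt₀ h)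
    rw [inv_inv] at wt_inv_inv
    linarith

theorem wt_inv_one_add {q : ℚ} (hq : 0 < q) : wt (1 + q)⁻¹ = 1 - wt q := by
  have wt_one_add : wt (1 + q) = 1 + wt q := mod_cast wt_intCast_add 1 q
  rw [wt_inv (by positivity), wt_one_add]
  ring

theorem wt_one_sub_eq_neg {q : ℚ} (h0 : 0 < q) (h1 : q < 1) : wt (1 - q) = -wt q := by
  obtain ⟨y, hy, rfl⟩ : ∃ y : ℚ, 0 < y ∧ (1 + y)⁻¹ = q :=
    ⟨q⁻¹ - 1, sub_pos.mpr ((one_lt_inv₀ h0).mpr h1), by simp⟩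
  have one_sub_eq : 1 - (1 + y)⁻¹ = (1 + y⁻¹)⁻¹ := by
    field_simp
    ring
  calc wt (1 - (1 + y)⁻¹) = wt (1 + y⁻¹)⁻¹ := by rw [one_sub_eq]
    _ = 1 - wt y⁻¹ := wt_inv_one_add (inv_pos.mpr hy)
    _ = wt y - 1 := by rw [wt_inv hy]; ring
    _ = -wt (1 + y)⁻¹ := by rw [wt_inv_one_add hy]; ring

theorem cf_pos {l : List ℕ} (hne : l ≠ []) (hlast : l.getLast? ≠ some 0) : 0 < cf l := by
  induction l with
  | nil => contradiction
  | cons a t ih =>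
    cases t with
    | nil => simpa [cf, Nat.pos_iff_ne_zero] using hlast
    | cons b t =>
      have tail_pos : 0 < cf (b :: t) := ih (List.cons_ne_nil b t) (by simpa using hlast)
      rw [cf_cons]
      positivity

theorem wtExp_cons (a b : ℕ) (t : List ℕ) : wtExp a (b :: t) = a + 2 - wtExp b t := by
  simp only [wtExp, altSum, List.length_cons, Nat.even_add_one]
  split_ifs <;> ring

theorem wt_cf (a : ℕ) {t : List ℕ} (hlast : t.getLast? ≠ some 0) :
    wt (cf (a :: t)) = wtExp a t := by
  induction t generalizing a with
  | nil => simpa [cf, wtExp, altSum] using wt_intCast a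
  | cons b t ih =>
    have tail_last : t.getLast? ≠ some 0 := by cases t <;> simp_all
    calc wt (cf (a :: b :: t)) = wt ((a : ℤ) + (cf (b :: t))⁻¹) := by rw [cf_cons, Int.cast_natCast]
      _ = a + wt (cf (b :: t))⁻¹ := wt_intCast_add a _
      _ = a + 2 - wt (cf (b :: t)) := by rw [wt_inv (cf_pos (List.cons_ne_nil b t) hlast)]; ring
      _ = wtExp a (b :: t) := by rw [ih b tail_last, wtExp_cons]

theorem wt_one_sub_general (α : ℚ) (h0 : 0 < α) (h1 : α < 1) (l m : List ℕ)
    (hl : l.getLast? ≠ some 0) (hm : m.getLast? ≠ some 0)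
    (hcl : cf (0 :: l) = α) (hcm : cf (0 :: m) = 1 - α) :
    wtExp 0 m = -wtExp 0 l := by
  rw [← wt_cf 0 hm, ← wt_cf 0 hl, hcl, hcm]
  exact wt_one_sub_eq_neg h0 h1

/-- for every rational `α` with `0 < α < 1`, `wt(1 - α) = -wt(α)`;
i.e. for any continued fraction expansion `[0, a₁, …, aₙ]` of `α` and any expansion
`[0, b₁, …, b_m]` of `1 - α` (with positive partial quotients), the weights are
negatives of each other. -/
theorem wt_one_sub (α : ℚ) (h0 : 0 < α) (h1 : α < 1) (l m : List ℕ)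
    (hl : ∀ x ∈ l, 0 < x) (hm : ∀ x ∈ m, 0 < x)
    (hcl : cf (0 :: l) = α) (hcm : cf (0 :: m) = 1 - α) :
    wtExp 0 m = -wtExp 0 l := by
  exact wt_one_sub_general α h0 h1 l m (fun h => (hl 0 (List.mem_of_getLast? h)).ne rfl)
    (fun h => (hm 0 (List.mem_of_getLast? h)).ne rfl) hcl hcm
end
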